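/- arXiv:1408.2137 — 2 statements merged into one kernel-verified Lean document; each statement's English description precedes it below -/
import Mathlib

section
/- If Y is a λ'-set (a subspace of the Cantor set 2^ω), then the countable power (2^ω \ Y)^ω is countable dense homogeneous. -/
/-- A space is a λ-set if every countable subset is Gδ. -/
def IsLambdaSet (X : Type*) [TopologicalSpace X] : Prop :=
  ∀ D : Set X, D.Countable → IsGδ D

/-- A subspace `X` of the Cantor set `2^ω` is a λ'-set if `X ∪ D` is a λ-set
for every countable `D ⊆ 2^ω`. -/
def IsLambdaPrimeSet (X : Set (ℕ → Bool)) : Prop :=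
  ∀ D : Set (ℕ → Bool), D.Countable → IsLambdaSet ↥(X ∪ D)
/-- A space is countable dense homogeneous (CDH) if for every pair of countable
dense subsets `A`, `B` there is a homeomorphism of the space onto itself
mapping `A` onto `B`. -/
def IsCDH (X : Type*) [TopologicalSpace X] : Prop :=
  ∀ A B : Set X, A.Countable → Dense A → B.Countable → Dense B →
    ∃ h : X ≃ₜ X, h '' A = B

/-!
Put `Z = 2^ω`, `X = Z^ω`, `P = (Z \ Y)^ω`, and let `A`, `B` be countable dense sets in `P`; the
homeomorphism of `P` is the restriction of one of `X`, built by a back-and-forth argument of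
Knaster–Reichbach type. Let `C` be the set of all coordinates of points of `A ∪ B` and `S` a
countable dense set in `Z` missing `Y ∪ C`. Since `C ∪ S` is a `Gδ` in `Y ∪ C ∪ S`, increasing
closed sets `K n` missing `C ∪ S` cover `Y`. Hence `X \ P` is covered by the increasing closed sets
`F n = {x | ∃ i ≤ n, x i ∈ K n}`, which miss `A ∪ B`. They are small: fixing the first few
coordinates in `S` and shifting the others gives in every nonempty open set a copy of the pair
`(X, P)` which misses `A ∪ B ∪ F n`.

An approximation consists of a closed partial bijection respecting `P` and matching `A` with `B`,
and of matched clopen partitions of `X`. At stage `n`, the part of `F n` that is not yet close to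
the domain is sent into copies of `(X, P)` that miss `F n`, similarly for the range, and all other
new points are also off `F n`. As no new point other than those of `F n` comes near `F n`, a point
of `F n` cannot stay close to the domain forever without being absorbed, so that the limit
homeomorphism is prescribed on all of `X \ P` and preserves `P`.
-/

open Set Topology Function

theorem IsLambdaSet.of_injective {X Y : Type*} [TopologicalSpace X] [TopologicalSpace Y]
    (hY : IsLambdaSet Y) {f : X → Y} (hf : Continuous f) (hinj : Injective f) :
    IsLambdaSet X := fun D hD => by
  rw [← hinj.preimage_image D]
  exact (hY _ (hD.image f)).preimage hf

theorem not_isLambdaSet_of_baireSpace (X : Type*) [TopologicalSpace X] [BaireSpace X] [T1Space X]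
    [PerfectSpace X] [TopologicalSpace.SeparableSpace X] [Nonempty X] :
    ¬ IsLambdaSet X := fun hX => by
  obtain ⟨S, hSc, hSd⟩ := TopologicalSpace.exists_countable_dense X
  have hSc' : Dense Sᶜ := by
    rw [← biUnion_of_singleton S, compl_iUnion₂]
    exact dense_biInter_of_isOpen (fun x _ => isOpen_compl_singleton) hSc
      fun x _ => dense_compl_singleton x
  have hSG : IsGδ Sᶜ := hSc.isGδ_compl
  simpa using (hSd.inter_of_Gδ (hX S hSc) hSG hSc').nonempty

theorem perfectSpace_of_isOpen {X : Type*} [TopologicalSpace X] [PerfectSpace X] {U : Set X}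
    (hU : IsOpen U) : PerfectSpace U := by
  refine perfectSpace_iff_forall_not_isolated.2 fun x => Filter.neBot_iff.2 fun hx => ?_
  have hopen := hU.isOpenMap_subtype_val _ ((isOpen_singleton_iff_punctured_nhds x).2 hx)
  rw [image_singleton, isOpen_singleton_iff_punctured_nhds] at hopen
  exact Filter.NeBot.ne inferInstance hopen

theorem IsLambdaSet.dense_compl {X : Type*} [TopologicalSpace X] [BaireSpace X] [T1Space X]
    [PerfectSpace X] [SecondCountableTopology X] {Z : Set X} (hZ : IsLambdaSet Z) :
    Dense Zᶜ := by
  by_contra hd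
  rw [← interior_eq_empty_iff_dense_compl, ← ne_eq, ← nonempty_iff_ne_empty] at hd
  have : Nonempty (interior Z) := hd.to_subtype
  have : BaireSpace (interior Z) := isOpen_interior.baireSpace
  have : PerfectSpace (interior Z) := perfectSpace_of_isOpen isOpen_interior
  exact not_isLambdaSet_of_baireSpace (interior Z)
    (hZ.of_injective (continuous_inclusion interior_subset) (inclusion_injective interior_subset))

theorem IsLambdaSet.exists_monotone_isClosed {X : Type*} [TopologicalSpace X] {Z E : Set X}
    (hZ : IsLambdaSet Z) (hE : E.Countable) (hEZ : E ⊆ Z) :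
    ∃ K : ℕ → Set X, Monotone K ∧ (∀ n, IsClosed (K n)) ∧ (∀ n, Disjoint E (K n)) ∧
      Z \ E ⊆ ⋃ n, K n := by
  obtain ⟨U, hU, hEU⟩ := isGδ_iff_eq_iInter_nat.1
    (hZ (Subtype.val ⁻¹' E) (hE.preimage Subtype.val_injective))
  choose V hV hVU using fun n => isOpen_induced_iff.1 (hU n)
  refine ⟨accumulate fun n => (V n)ᶜ, monotone_accumulate, fun n => ?_, fun n => ?_, ?_⟩
  · exact (finite_le_nat n).isClosed_biUnion fun i _ => (hV i).isClosed_compl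
  · refine disjoint_iUnion₂_right.2 fun i _ => disjoint_compl_right_iff_subset.2 fun x hx => ?_
    have hxU : (⟨x, hEZ hx⟩ : Z) ∈ ⋂ n, U n := hEU ▸ hx
    have := mem_iInter.1 hxU i
    rwa [← hVU i] at this
  · rintro x ⟨hxZ, hxE⟩
    have hxU : (⟨x, hxZ⟩ : Z) ∉ ⋂ n, U n := hEU ▸ hxE
    obtain ⟨n, hn⟩ := by simpa only [mem_iInter, not_forall] using hxU
    rw [← hVU n] at hn
    exact mem_iUnion.2 ⟨n, subset_accumulate hn⟩

instance perfectSpace_pi {ι : Type*} [Infinite ι] {X : ι → Type*} [∀ i, TopologicalSpace (X i)]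
    [∀ i, Nontrivial (X i)] : PerfectSpace (∀ i, X i) := by
  classical
  refine perfectSpace_iff_forall_not_isolated.2 fun x => Filter.neBot_iff.2 fun hx => ?_
  obtain ⟨I, u, hu, hux⟩ := isOpen_pi_iff.1 ((isOpen_singleton_iff_punctured_nhds x).2 hx) x rfl
  obtain ⟨i, hi⟩ := Infinite.exists_notMem_finset I
  obtain ⟨z, hz⟩ := exists_ne (x i)
  have hmem : update x i z ∈ (I : Set ι).pi u := fun j hj => by
    rw [update_of_ne (ne_of_mem_of_not_mem hj hi)]
    exact (hu j hj).2
  exact hz (by simpa using congrFun (hux hmem) i)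

section CellHull

variable {X : Type*} [TopologicalSpace X]

/-- The union of the cells of the clopen partition `Q` that meet `M`. -/
def cellHull (Q : DiscreteQuotient X) (M : Set X) : Set X := Q.proj ⁻¹' (Q.proj '' M)

variable {Q Q' : DiscreteQuotient X} {M M' : Set X}

theorem proj_eq_of_le (h : Q' ≤ Q) {x y : X} (hxy : Q'.proj x = Q'.proj y) :
    Q.proj x = Q.proj y := by
  rw [← DiscreteQuotient.ofLE_proj h, hxy, DiscreteQuotient.ofLE_proj]

theorem subset_cellHull : M ⊆ cellHull Q M := subset_preimage_image _ _

theorem isClopen_cellHull : IsClopen (cellHull Q M) := Q.isClopen_preimage _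

theorem cellHull_union : cellHull Q (M ∪ M') = cellHull Q M ∪ cellHull Q M' := by
  rw [cellHull, image_union, preimage_union]; rfl

theorem cellHull_anti_left (h : Q' ≤ Q) : cellHull Q' M ⊆ cellHull Q M := by
  rintro x ⟨y, hy, hyx⟩
  exact ⟨y, hy, proj_eq_of_le h hyx⟩

theorem exists_disjoint_cellHull [CompactSpace X] [T2Space X] [TotallyDisconnectedSpace X]
    (hM : IsClosed M) (hM' : IsClosed M') (h : Disjoint M M') :
    ∃ Q : DiscreteQuotient X, Disjoint M (cellHull Q M') := by
  obtain ⟨C, hC, hM'C, hCM⟩ := exists_clopen_of_closed_subset_open hM' hM.isOpen_compl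
    h.subset_compl_left
  refine ⟨.ofIsClopen hC, disjoint_right.2 ?_⟩
  rintro x ⟨y, hy, hyx⟩ hxM
  have hyxC : y ∈ C ↔ x ∈ C := Quotient.exact' hyx
  exact hCM (hyxC.1 (hM'C hy)) hxM

end CellHull

section Copies

variable {X : Type*} [TopologicalSpace X]

/-- Every nonempty open set contains, away from `Z`, a homeomorphic copy of the pair `(X, P)`
(when `X` is compact Hausdorff, the map `e` below is an embedding). -/
def HasCopiesOff (P Z : Set X) : Prop :=
  ∀ V : Set X, IsOpen V → V.Nonempty →
    ∃ e : X → X, Continuous e ∧ Injective e ∧ range e ⊆ V \ Z ∧ e ⁻¹' P = P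

variable {P Z : Set X}

theorem HasCopiesOff.exists_piecewise {ι : Type*} [TopologicalSpace ι] [DiscreteTopology ι]
    (h : HasCopiesOff P Z) {c : X → ι} (hc : Continuous c) {V : ι → Set X}
    (hVo : ∀ i, IsOpen (V i)) (hVd : Pairwise (Disjoint on V))
    (hVne : ∀ x, (V (c x)).Nonempty) :
    ∃ e : X → X, Continuous e ∧ Injective e ∧ (∀ x, e x ∈ V (c x) \ Z) ∧ e ⁻¹' P = P := by
  choose f hf hfinj hfran hfP using fun i : range c =>
    h (V i) (hVo i) (by obtain ⟨_, x, rfl⟩ := i; exact hVne x)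
  let e (x : X) : X := f (rangeFactorization c x) x
  have hmem (x : X) : e x ∈ V (c x) \ Z :=
    hfran (rangeFactorization c x) (mem_range_self x)
  refine ⟨e, ?_, fun x y (hxy : e x = e y) => ?_, hmem, ?_⟩
  · exact (continuous_prod_of_discrete_left (f := uncurry f).2 hf).comp
      (hc.rangeFactorization.prodMk continuous_id)
  · have hcxy : c x = c y := by
      by_contra hne
      exact disjoint_left.1 (hVd hne) (hmem x).1 (hxy ▸ (hmem y).1)
    have : rangeFactorization c x = rangeFactorization c y := Subtype.ext hcxy
    exact hfinj _ (hxy.trans (by rw [this]))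
  · ext x
    exact Set.ext_iff.1 (hfP (rangeFactorization c x)) x

theorem HasCopiesOff.perfectSpace {A : Set X} (hP : HasCopiesOff P A) (hA : Dense A) :
    PerfectSpace X := by
  refine perfectSpace_iff_forall_not_isolated.2 fun x => Filter.neBot_iff.2 fun hx => ?_
  have hopen : IsOpen {x} := (isOpen_singleton_iff_punctured_nhds x).2 hx
  obtain ⟨e, -, -, hran, -⟩ := hP {x} hopen (singleton_nonempty x)
  obtain ⟨hex, hexA⟩ := hran (mem_range_self x)
  obtain ⟨y, hy, hyA⟩ := hA.inter_open_nonempty {x} hopen (singleton_nonempty x)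
  rw [mem_singleton_iff] at hex hy
  exact hexA (hex.trans hy.symm ▸ hyA)

end Copies

theorem image_fst_preimage_swap {α β : Type*} (R : Set (α × β)) :
    Prod.fst '' (Prod.swap ⁻¹' R) = Prod.snd '' R := by
  rw [← image_swap_eq_preimage_swap, image_image]; rfl

theorem image_snd_preimage_swap {α β : Type*} (R : Set (α × β)) :
    Prod.snd '' (Prod.swap ⁻¹' R) = Prod.fst '' R := by
  rw [← image_swap_eq_preimage_swap, image_image]; rfl

theorem injOn_union_of_disjoint_image {α β : Type*} {f : α → β} {s t : Set α} (hs : InjOn f s)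
    (ht : InjOn f t) (hst : Disjoint (f '' s) (f '' t)) : InjOn f (s ∪ t) :=
  (injOn_union hst.of_image).2
    ⟨hs, ht, fun _ hx _ hy => hst.ne_of_mem (mem_image_of_mem f hx) (mem_image_of_mem f hy)⟩

section Matching

variable {X : Type*} [TopologicalSpace X] {P A B F : Set X} {c d : LocallyConstant X ℕ}
  {R R' R'' : Set (X × X)}

/-- An approximation of a homeomorphism `h` of `X` with `h ⁻¹' P = P` and `h '' A = B`: the closed
relation `R` is part of the graph of `h`, and `h` carries the clopen partition given by the
colouring `c` to the one given by `d`. -/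
structure IsMatching (P A B : Set X) (c d : LocallyConstant X ℕ) (R : Set (X × X)) : Prop where
  isClosed : IsClosed R
  injOn_fst : InjOn Prod.fst R
  injOn_snd : InjOn Prod.snd R
  mem_iff : ∀ p ∈ R, p.1 ∈ P ↔ p.2 ∈ P
  mem_dense_iff : ∀ p ∈ R, p.1 ∈ A ↔ p.2 ∈ B
  finite : {p ∈ R | p.1 ∈ A}.Finite
  color_eq : ∀ p ∈ R, c p.1 = d p.2

namespace IsMatching

theorem empty : IsMatching P A B c d ∅ where
  isClosed := isClosed_empty
  injOn_fst := injOn_empty _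
  injOn_snd := injOn_empty _
  mem_iff := by simp
  mem_dense_iff := by simp
  finite := by simp
  color_eq := by simp

theorem swap (h : IsMatching P A B c d R) : IsMatching P B A d c (Prod.swap ⁻¹' R) where
  isClosed := h.isClosed.preimage continuous_swap
  injOn_fst _ hp _ hq hpq := Prod.swap_injective (h.injOn_snd hp hq hpq)
  injOn_snd _ hp _ hq hpq := Prod.swap_injective (h.injOn_fst hp hq hpq)
  mem_iff _ hp := (h.mem_iff _ hp).symm
  mem_dense_iff _ hp := (h.mem_dense_iff _ hp).symm
  finite := (h.finite.preimage Prod.swap_injective.injOn).subset fun _ hp =>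
    ⟨hp.1, (h.mem_dense_iff _ hp.1).2 hp.2⟩
  color_eq _ hp := (h.color_eq _ hp).symm

theorem isClosed_image_fst [CompactSpace X] [T2Space X] (h : IsMatching P A B c d R) :
    IsClosed (Prod.fst '' R) :=
  (h.isClosed.isCompact.image continuous_fst).isClosed

theorem isClosed_image_snd [CompactSpace X] [T2Space X] (h : IsMatching P A B c d R) :
    IsClosed (Prod.snd '' R) :=
  (h.isClosed.isCompact.image continuous_snd).isClosed

theorem finite_image_snd_inter (h : IsMatching P A B c d R) : (Prod.snd '' R ∩ B).Finite := by
  refine (h.finite.image Prod.snd).subset ?_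
  rintro _ ⟨⟨p, hp, rfl⟩, hpB⟩
  exact ⟨p, ⟨hp, (h.mem_dense_iff p hp).2 hpB⟩, rfl⟩

theorem union_graphOn [T2Space X] [CompactSpace X] (h : IsMatching P A B c d R) {E : Set X}
    (hE : IsClosed E) {e : X → X} (he : Continuous e) (hinj : InjOn e E)
    (hdom : Disjoint E (Prod.fst '' R)) (hran : Disjoint (e '' E) (Prod.snd '' R))
    (hP : ∀ x ∈ E, x ∈ P ↔ e x ∈ P) (hAB : ∀ x ∈ E, x ∈ A ↔ e x ∈ B) (hfin : (E ∩ A).Finite)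
    (hcd : ∀ x ∈ E, c x = d (e x)) :
    IsMatching P A B c d (R ∪ E.graphOn e) where
  isClosed := by
    refine h.isClosed.union (hE.isCompact.image (f := fun x => (x, e x)) (by fun_prop)).isClosed
  injOn_fst := injOn_union_of_disjoint_image h.injOn_fst fst_injOn_graph <| by
    rw [image_fst_graphOn]
    exact hdom.symm
  injOn_snd := by
    refine injOn_union_of_disjoint_image h.injOn_snd ?_ ?_
    · rintro _ ⟨x, hx, rfl⟩ _ ⟨y, hy, rfl⟩ hxy
      rw [hinj hx hy hxy]
    · rw [image_snd_graphOn]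
      exact hran.symm
  mem_iff := by
    rintro p (hp | ⟨x, hx, rfl⟩)
    exacts [h.mem_iff p hp, hP x hx]
  mem_dense_iff := by
    rintro p (hp | ⟨x, hx, rfl⟩)
    exacts [h.mem_dense_iff p hp, hAB x hx]
  finite := by
    refine (h.finite.union (hfin.image fun x => (x, e x))).subset ?_
    rintro p ⟨hp | ⟨x, hx, rfl⟩, hpA⟩
    exacts [.inl ⟨hp, hpA⟩, .inr ⟨x, ⟨hx, hpA⟩, rfl⟩]
  color_eq := by
    rintro p (hp | ⟨x, hx, rfl⟩)
    exacts [h.color_eq p hp, hcd x hx]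

end IsMatching

/-- `M'` arises from `M` by adding `E` and, apart from it, only a closed set of points off `F`. -/
def AddsOff (F E M M' : Set X) : Prop :=
  ∃ K, IsClosed K ∧ Disjoint K F ∧ M' = M ∪ E ∪ K

theorem AddsOff.trans {E₁ E₂ M₁ M₂ M₃ : Set X} (h₁ : AddsOff F E₁ M₁ M₂)
    (h₂ : AddsOff F E₂ M₂ M₃) : AddsOff F (E₁ ∪ E₂) M₁ M₃ := by
  obtain ⟨K₁, hK₁, hK₁F, rfl⟩ := h₁
  obtain ⟨K₂, hK₂, hK₂F, rfl⟩ := h₂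
  exact ⟨K₁ ∪ K₂, hK₁.union hK₂, hK₁F.union_left hK₂F, by ac_rfl⟩

theorem AddsOff.disjoint {E M M' : Set X} (h : AddsOff F ∅ M M') (hEF : E ⊆ F)
    (hEM : Disjoint E M) : Disjoint E M' := by
  obtain ⟨K, -, hKF, rfl⟩ := h
  rw [union_empty]
  exact hEM.union_right (hKF.symm.mono_left hEF)

/-- The relation `R'` extends `R`; its domain gains `E` and its range gains `E'`, and otherwise
both gain only closed sets of points off `F`. -/
structure Grows (F E E' : Set X) (R R' : Set (X × X)) : Prop where
  subset : R ⊆ R'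
  fst : AddsOff F E (Prod.fst '' R) (Prod.fst '' R')
  snd : AddsOff F E' (Prod.snd '' R) (Prod.snd '' R')

namespace Grows

variable {E E' E₁ E₂ E₁' E₂' : Set X}

theorem refl : Grows F ∅ ∅ R R where
  subset := Subset.rfl
  fst := ⟨∅, isClosed_empty, empty_disjoint F, by simp⟩
  snd := ⟨∅, isClosed_empty, empty_disjoint F, by simp⟩

theorem trans (h₁ : Grows F E₁ E₁' R R') (h₂ : Grows F E₂ E₂' R' R'') :
    Grows F (E₁ ∪ E₂) (E₁' ∪ E₂') R R'' where
  subset := h₁.subset.trans h₂.subset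
  fst := h₁.fst.trans h₂.fst
  snd := h₁.snd.trans h₂.snd

theorem swap (h : Grows F E E' R R') : Grows F E' E (Prod.swap ⁻¹' R) (Prod.swap ⁻¹' R') where
  subset := preimage_mono h.subset
  fst := by simpa only [image_fst_preimage_swap] using h.snd
  snd := by simpa only [image_snd_preimage_swap] using h.fst

end Grows

end Matching

section Extension

variable {X : Type*} [TopologicalSpace X]
  {P A B F : Set X} {c d : LocallyConstant X ℕ} {R : Set (X × X)}

/-- The conditions under which a matching for `P`, `A`, `B`, `c`, `d` can always be enlarged, both
by points of `A` and `B` and by closed subsets of `F`. -/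
structure IsExtensible (P A B F : Set X) (c d : LocallyConstant X ℕ) : Prop where
  dense_left : Dense A
  dense_right : Dense B
  left_subset : A ⊆ P
  right_subset : B ⊆ P
  left_disjoint : Disjoint A F
  right_disjoint : Disjoint B F
  hasCopiesOff : HasCopiesOff P (A ∪ B ∪ F)
  range_eq : range c = range d

namespace IsExtensible

theorem swap (h : IsExtensible P A B F c d) : IsExtensible P B A F d c where
  dense_left := h.dense_right
  dense_right := h.dense_left
  left_subset := h.right_subset
  right_subset := h.left_subset
  left_disjoint := h.right_disjoint
  right_disjoint := h.left_disjoint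
  hasCopiesOff := union_comm A B ▸ h.hasCopiesOff
  range_eq := h.range_eq.symm

theorem exists_notMem_image_snd [T1Space X] (h : IsExtensible P A B F c d)
    (hR : IsMatching P A B c d R) (x : X) : ∃ b ∈ B, d b = c x ∧ b ∉ Prod.snd '' R := by
  have := h.hasCopiesOff.perfectSpace (h.dense_left.mono fun _ hx => .inl (.inl hx))
  have hdense : Dense (B \ (Prod.snd '' R ∩ B)) :=
    h.dense_right.sdiff_finite hR.finite_image_snd_inter
  obtain ⟨y, hy⟩ : c x ∈ range d := h.range_eq ▸ mem_range_self x
  obtain ⟨b, hb, hbB, hbR⟩ := hdense.inter_open_nonempty (d ⁻¹' {c x})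
    (d.isLocallyConstant.isOpen_fiber _) ⟨y, hy⟩
  exact ⟨b, hbB, hb, fun hbR' => hbR ⟨hbR', hbB⟩⟩

variable [CompactSpace X] [T2Space X]

theorem exists_grows_fst (h : IsExtensible P A B F c d) (hR : IsMatching P A B c d R) {E : Set X}
    (hE : IsClosed E) (hEF : E ⊆ F) (hER : Disjoint E (Prod.fst '' R)) :
    ∃ R', IsMatching P A B c d R' ∧ Grows F E ∅ R R' := by
  let V (i : ℕ) : Set X := d ⁻¹' {i} \ Prod.snd '' R
  obtain ⟨e, he, hinj, hmem, heP⟩ := h.hasCopiesOff.exists_piecewise (V := V) c.continuous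
    (fun i => (d.isLocallyConstant.isOpen_fiber i).sdiff hR.isClosed_image_snd)
    (fun i j hij => ((disjoint_singleton.2 hij).preimage d).mono sdiff_subset sdiff_subset)
    (fun x => by
      obtain ⟨b, -, hb, hbR⟩ := h.exists_notMem_image_snd hR x
      exact ⟨b, hb, hbR⟩)
  have hEA : Disjoint E A := (h.left_disjoint.mono_right hEF).symm
  refine ⟨R ∪ E.graphOn e, hR.union_graphOn hE he hinj.injOn hER ?_ ?_ ?_ ?_ ?_,
    subset_union_left, ?_, ?_⟩
  · exact disjoint_left.2 <| forall_mem_image.2 fun x _ => (hmem x).1.2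
  · exact fun x _ => (Set.ext_iff.1 heP x).symm
  · exact fun x hx => iff_of_false (disjoint_left.1 hEA hx) fun hxB => (hmem x).2 (.inl (.inr hxB))
  · simp [hEA.inter_eq]
  · exact fun x _ => (hmem x).1.1.symm
  · exact ⟨∅, isClosed_empty, empty_disjoint F, by simp [image_union]⟩
  · refine ⟨e '' E, (hE.isCompact.image he).isClosed, ?_, by simp [image_union]⟩
    exact disjoint_left.2 <| forall_mem_image.2 fun x _ hx => (hmem x).2 (.inr hx)

theorem exists_grows_snd (h : IsExtensible P A B F c d) (hR : IsMatching P A B c d R) {E : Set X}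
    (hE : IsClosed E) (hEF : E ⊆ F) (hER : Disjoint E (Prod.snd '' R)) :
    ∃ R', IsMatching P A B c d R' ∧ Grows F ∅ E R R' := by
  obtain ⟨R', hR', hgrows⟩ := h.swap.exists_grows_fst hR.swap hE hEF
    (by rwa [image_fst_preimage_swap])
  exact ⟨_, hR'.swap, hgrows.swap⟩

theorem exists_grows_mem_fst (h : IsExtensible P A B F c d) (hR : IsMatching P A B c d R) {a : X}
    (ha : a ∈ A) : ∃ R', IsMatching P A B c d R' ∧ Grows F ∅ ∅ R R' ∧ a ∈ Prod.fst '' R' := by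
  by_cases haR : a ∈ Prod.fst '' R
  · exact ⟨R, hR, .refl, haR⟩
  obtain ⟨b, hb, hba, hbR⟩ := h.exists_notMem_image_snd hR a
  refine ⟨R ∪ graphOn (fun _ => b) {a}, hR.union_graphOn isClosed_singleton continuous_const
    (injOn_singleton _ _) (disjoint_singleton_left.2 haR) ?_ ?_ ?_ ?_ ?_,
    ⟨subset_union_left, ⟨{a}, isClosed_singleton, ?_, ?_⟩, ⟨{b}, isClosed_singleton, ?_, ?_⟩⟩, ?_⟩
  · simpa using hbR
  · exact fun x hx => iff_of_true (hx ▸ h.left_subset ha) (h.right_subset hb)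
  · exact fun x hx => iff_of_true (hx ▸ ha) hb
  · exact (finite_singleton a).inter_of_left A
  · rintro _ rfl
    exact hba.symm
  · exact disjoint_singleton_left.2 (disjoint_left.1 h.left_disjoint ha)
  · simp [image_insert_eq]
  · exact disjoint_singleton_left.2 (disjoint_left.1 h.right_disjoint hb)
  · simp [image_insert_eq]
  · simp

theorem exists_grows_subset_fst (h : IsExtensible P A B F c d) (hR : IsMatching P A B c d R)
    {S : Set X} (hS : S.Finite) (hSA : S ⊆ A) :
    ∃ R', IsMatching P A B c d R' ∧ Grows F ∅ ∅ R R' ∧ S ⊆ Prod.fst '' R' := by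
  induction S, hS using Set.Finite.induction_on with
  | empty => exact ⟨R, hR, .refl, empty_subset _⟩
  | @insert a S _ _ ih =>
    obtain ⟨haA, hSA⟩ := insert_subset_iff.1 hSA
    obtain ⟨R₁, hR₁, hg₁, hS⟩ := ih hSA
    obtain ⟨R₂, hR₂, hg₂, ha⟩ := h.exists_grows_mem_fst hR₁ haA
    exact ⟨R₂, hR₂, by simpa using hg₁.trans hg₂,
      insert_subset ha (hS.trans (image_mono hg₂.subset))⟩

theorem exists_grows_subset_snd (h : IsExtensible P A B F c d) (hR : IsMatching P A B c d R)
    {T : Set X} (hT : T.Finite) (hTB : T ⊆ B) :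
    ∃ R', IsMatching P A B c d R' ∧ Grows F ∅ ∅ R R' ∧ T ⊆ Prod.snd '' R' := by
  obtain ⟨R', hR', hgrows, hTR'⟩ := h.swap.exists_grows_subset_fst hR.swap hT hTB
  exact ⟨_, hR'.swap, hgrows.swap, by rwa [image_snd_preimage_swap]⟩

theorem exists_grows (h : IsExtensible P A B F c d) (hR : IsMatching P A B c d R)
    {E E' S T : Set X} (hE : IsClosed E) (hEF : E ⊆ F) (hER : Disjoint E (Prod.fst '' R))
    (hE' : IsClosed E') (hE'F : E' ⊆ F) (hE'R : Disjoint E' (Prod.snd '' R))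
    (hS : S.Finite) (hSA : S ⊆ A) (hT : T.Finite) (hTB : T ⊆ B) :
    ∃ R', IsMatching P A B c d R' ∧ Grows F E E' R R' ∧
      S ⊆ Prod.fst '' R' ∧ T ⊆ Prod.snd '' R' := by
  obtain ⟨R₁, hR₁, hg₁⟩ := h.exists_grows_fst hR hE hEF hER
  obtain ⟨R₂, hR₂, hg₂⟩ := h.exists_grows_snd hR₁ hE' hE'F (hg₁.snd.disjoint hE'F hE'R)
  obtain ⟨R₃, hR₃, hg₃, hSR₃⟩ := h.exists_grows_subset_fst hR₂ hS hSA
  obtain ⟨R₄, hR₄, hg₄, hTR₄⟩ := h.exists_grows_subset_snd hR₃ hT hTB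
  exact ⟨R₄, hR₄, by simpa using ((hg₁.trans hg₂).trans hg₃).trans hg₄,
    hSR₃.trans (image_mono hg₄.subset), hTR₄⟩

end IsExtensible

end Extension

section Refinement

variable {X : Type*} [TopologicalSpace X]

theorem discreteQuotient_le_iff {α : Type*} {c : LocallyConstant X α} {Q : DiscreteQuotient X} :
    c.discreteQuotient ≤ Q ↔ ∀ x y, c x = c y → Q.proj x = Q.proj y :=
  ⟨fun h _ _ hxy => Quotient.sound' (h hxy), fun h x y hxy => Quotient.exact' (h x y hxy)⟩

theorem eq_of_proj_eq_of_le {α : Type*} {c : LocallyConstant X α} {Q : DiscreteQuotient X}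
    (h : Q ≤ c.discreteQuotient) {x y : X} (hxy : Q.proj x = Q.proj y) : c x = c y :=
  h (Quotient.exact' hxy)

variable [CompactSpace X] [T2Space X] [TotallyDisconnectedSpace X]

theorem exists_locallyConstant_extension {K α : Type*} [TopologicalSpace K] [CompactSpace K]
    {f : K → X} (hf : Continuous f) (hinj : Injective f) (s : LocallyConstant K α)
    (Q : DiscreteQuotient X) (hQ : Surjective (Q.proj ∘ f))
    (hs : ∀ p q, s p = s q → Q.proj (f p) = Q.proj (f q)) :
    ∃ c : LocallyConstant X α, (∀ p, c (f p) = s p) ∧ range c = range s ∧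
      c.discreteQuotient ≤ Q := by
  let _ : TopologicalSpace α := ⊥
  have : DiscreteTopology α := ⟨rfl⟩
  have : Finite (range s) := s.range_finite
  let r (i : range s) : Q := Q.proj (f i.2.choose)
  have hr (p : K) : r (rangeFactorization s p) = Q.proj (f p) :=
    hs _ _ (rangeFactorization s p).2.choose_spec
  obtain ⟨k, hk, hrk, hkf⟩ := Profinite.exists_lift_of_finite_of_injective_of_surjective f hf hinj r
    (fun q => (hQ q).imp' (rangeFactorization s) fun p hp => (hr p).trans hp)
    (rangeFactorization s) s.continuous.rangeFactorization Q.proj Q.proj_continuous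
    (funext fun p => (hr p).symm)
  have hkf' (p : K) : (k (f p) : α) = s p := congrArg Subtype.val (congrFun hkf p)
  refine ⟨⟨fun x => k x, (IsLocallyConstant.iff_continuous _).2 (by fun_prop)⟩, hkf', ?_, ?_⟩
  · refine Subset.antisymm (range_subset_iff.2 fun x => (k x).2) ?_
    exact range_subset_iff.2 fun p => ⟨f p, hkf' p⟩
  · refine discreteQuotient_le_iff.2 fun x y hxy => ?_
    have hkxy : k x = k y := Subtype.ext hxy
    rw [← hrk, comp_apply, comp_apply, hkxy]

theorem IsMatching.exists_refinement {P A B : Set X} {c d : LocallyConstant X ℕ}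
    {R : Set (X × X)} (hR : IsMatching P A B c d R) {U V : DiscreteQuotient X}
    (hU : U ≤ c.discreteQuotient) (hV : V ≤ d.discreteQuotient)
    (hRU : SurjOn U.proj (Prod.fst '' R) univ) (hRV : SurjOn V.proj (Prod.snd '' R) univ) :
    ∃ c' d' : LocallyConstant X ℕ, IsMatching P A B c' d' R ∧ range c' = range d' ∧
      c'.discreteQuotient ≤ U ∧ d'.discreteQuotient ≤ V ∧ ∀ x y, c' x = d' y → c x = d y := by
  obtain ⟨φ, hφ⟩ := exists_injective_nat (U × V)
  have : CompactSpace R := isCompact_iff_compactSpace.1 hR.isClosed.isCompact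
  let s : LocallyConstant R ℕ := ⟨fun p => φ (U.proj p.1.1, V.proj p.1.2),
    (IsLocallyConstant.iff_continuous _).2 <| continuous_of_discreteTopology.comp <| by
      have := U.proj_continuous
      have := V.proj_continuous
      fun_prop⟩
  have hs {p q : R} (hpq : s p = s q) :
      U.proj p.1.1 = U.proj q.1.1 ∧ V.proj p.1.2 = V.proj q.1.2 := Prod.ext_iff.1 (hφ hpq)
  obtain ⟨c', hc's, hc'ran, hc'U⟩ := exists_locallyConstant_extension
    (f := fun p : R => p.1.1) (by fun_prop) (injOn_iff_injective.1 hR.injOn_fst) s U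
    (fun u => by
      obtain ⟨_, ⟨p, hp, rfl⟩, rfl⟩ := hRU (mem_univ u)
      exact ⟨⟨p, hp⟩, rfl⟩) fun _ _ h => (hs h).1
  obtain ⟨d', hd's, hd'ran, hd'V⟩ := exists_locallyConstant_extension
    (f := fun p : R => p.1.2) (by fun_prop) (injOn_iff_injective.1 hR.injOn_snd) s V
    (fun v => by
      obtain ⟨_, ⟨p, hp, rfl⟩, rfl⟩ := hRV (mem_univ v)
      exact ⟨⟨p, hp⟩, rfl⟩) fun _ _ h => (hs h).2
  refine ⟨c', d', { hR with color_eq := fun p hp => (hc's ⟨p, hp⟩).trans (hd's ⟨p, hp⟩).symm },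
    hc'ran.trans hd'ran.symm, hc'U, hd'V, fun x y hxy => ?_⟩
  obtain ⟨p, hp⟩ : c' x ∈ range s := hc'ran ▸ mem_range_self x
  calc c x = c p.1.1 := eq_of_proj_eq_of_le hU <|
        discreteQuotient_le_iff.1 hc'U _ _ (hp.symm.trans (hc's p).symm)
    _ = d p.1.2 := hR.color_eq p.1 p.2
    _ = d y := eq_of_proj_eq_of_le hV <|
        discreteQuotient_le_iff.1 hd'V _ _ ((hd's p).trans (hp.trans hxy))

end Refinement

section Absorption

variable {X : Type*} [TopologicalSpace X]

/-- `M'` arises from `M` by absorbing every point of `F` that the partition `L` separates from `M`,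
and the partition `L'` separates all further new points from `F`. -/
def AbsorbsFar (F : Set X) (L : DiscreteQuotient X) (M : Set X) (L' : DiscreteQuotient X)
    (M' : Set X) : Prop :=
  ∃ K, Disjoint F (cellHull L' K) ∧ M' = M ∪ (F \ cellHull L M) ∪ K

variable [CompactSpace X] [T2Space X] [TotallyDisconnectedSpace X]

theorem AddsOff.exists_absorbsFar {F M M' : Set X} {L : DiscreteQuotient X} (hF : IsClosed F)
    (h : AddsOff F (F \ cellHull L M) M M') :
    ∃ L₀ : DiscreteQuotient X, ∀ L' ≤ L₀, AbsorbsFar F L M L' M' := by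
  obtain ⟨K, hK, hKF, rfl⟩ := h
  obtain ⟨L₀, hL₀⟩ := exists_disjoint_cellHull hF hK hKF.symm
  exact ⟨L₀, fun L' hL' => ⟨K, hL₀.mono_right (cellHull_anti_left hL'), rfl⟩⟩

theorem iUnion_subset_iUnion_of_absorbsFar {F M : ℕ → Set X} {L : ℕ → DiscreteQuotient X}
    (hF : Monotone F) (hM : ∀ n, IsClosed (M n)) (hL : Antitone L)
    (hLcof : ∀ Q : DiscreteQuotient X, ∃ n, L n ≤ Q)
    (hstep : ∀ n, AbsorbsFar (F n) (L n) (M n) (L (n + 1)) (M (n + 1))) :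
    ⋃ n, F n ⊆ ⋃ n, M n := by
  refine iUnion_subset fun m x hxF => by_contra fun hx => ?_
  rw [mem_iUnion, not_exists] at hx
  obtain ⟨Q, hQ⟩ := exists_disjoint_cellHull isClosed_singleton (hM m)
    (disjoint_singleton_left.2 (hx m))
  obtain ⟨N, hN⟩ := hLcof Q
  let n := max m N
  have hfar : ∀ k ≥ m, k ≤ n → x ∉ cellHull (L n) (M k) := by
    refine Nat.le_induction (fun _ hxm => ?_) fun k hk ih hkn => ?_
    · exact disjoint_singleton_left.1 hQ
        (cellHull_anti_left ((hL (le_max_right m N)).trans hN) hxm)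
    obtain ⟨K, hKF, hMk⟩ := hstep k
    have hxk : x ∈ cellHull (L k) (M k) := by_contra fun hxk =>
      hx (k + 1) (hMk ▸ .inl (.inr ⟨hF hk hxF, hxk⟩))
    rw [hMk, cellHull_union, cellHull_union]
    rintro ((hxM | ⟨y, ⟨-, hy⟩, hyx⟩) | hxK)
    · exact ih (by lia) hxM
    · obtain ⟨z, hz, hzx⟩ := hxk
      exact hy ⟨z, hz, hzx.trans (proj_eq_of_le (hL (by lia)) hyx).symm⟩
    · exact disjoint_left.1 hKF (hF hk hxF) (cellHull_anti_left (hL hkn) hxK)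
  obtain ⟨_, -, hMn⟩ := hstep n
  exact hx (n + 1) (hMn ▸ .inl (.inr ⟨hF (le_max_left m N) hxF, hfar n (le_max_left m N) le_rfl⟩))

end Absorption

section BackAndForth

variable {X : Type*} [TopologicalSpace X] {P A B : Set X}

theorem exists_finite_surjOn_proj_of_dense [CompactSpace X] {S : Set X} (hS : Dense S)
    (Q : DiscreteQuotient X) : ∃ T ⊆ S, T.Finite ∧ SurjOn Q.proj T univ := by
  have hSQ : SurjOn Q.proj S univ := fun q _ => by
    obtain ⟨x, hxq, hxS⟩ := hS.inter_open_nonempty _ (Q.isOpen_preimage {q})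
      (Q.proj_surjective q)
    exact ⟨x, hxS, hxq⟩
  obtain ⟨T, hTS, hT⟩ := hSQ.exists_bijOn_subset
  exact ⟨T, hTS, hT.finite_iff_finite.2 finite_univ, hT.surjOn⟩

/-- A stage of the back-and-forth construction: a matching of colourings with the same range,
together with the partition `level` used as separation scale by `AbsorbsFar`. -/
structure Stage (P A B : Set X) where
  rel : Set (X × X)
  left : LocallyConstant X ℕ
  right : LocallyConstant X ℕ
  level : DiscreteQuotient X
  isMatching : IsMatching P A B left right rel
  range_eq : range left = range right

namespace Stage

/-- The requirements on a stage `t` following the stage `s`, with tasks given by the closed set `F`,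
the points `a` and `b`, and the partition `Q`. -/
structure Step (F : Set X) (a b : X) (Q : DiscreteQuotient X) (s t : Stage P A B) : Prop where
  rel_subset : s.rel ⊆ t.rel
  coherent : ∀ x y, t.left x = t.right y → s.left x = s.right y
  left_le : t.left.discreteQuotient ≤ Q
  right_le : t.right.discreteQuotient ≤ Q
  level_le : t.level ≤ s.level ⊓ Q
  absorbs_fst : AbsorbsFar F s.level (Prod.fst '' s.rel) t.level (Prod.fst '' t.rel)
  absorbs_snd : AbsorbsFar F s.level (Prod.snd '' s.rel) t.level (Prod.snd '' t.rel)
  mem_fst : a ∈ Prod.fst '' t.rel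
  mem_snd : b ∈ Prod.snd '' t.rel

variable [CompactSpace X] [T2Space X] [TotallyDisconnectedSpace X]

theorem exists_step {F : Set X} (hF : IsClosed F) (s : Stage P A B)
    (h : IsExtensible P A B F s.left s.right) {a b : X} (ha : a ∈ A) (hb : b ∈ B)
    (Q : DiscreteQuotient X) : ∃ t : Stage P A B, Step F a b Q s t := by
  obtain ⟨S, hSA, hSfin, hS⟩ :=
    exists_finite_surjOn_proj_of_dense h.dense_left (s.left.discreteQuotient ⊓ Q)
  obtain ⟨T, hTB, hTfin, hT⟩ :=
    exists_finite_surjOn_proj_of_dense h.dense_right (s.right.discreteQuotient ⊓ Q)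
  obtain ⟨R, hR, hgrows, hSR, hTR⟩ := h.exists_grows s.isMatching
    (hF.sdiff isClopen_cellHull.isOpen) sdiff_subset
    (disjoint_sdiff_left.mono_right subset_cellHull)
    (hF.sdiff isClopen_cellHull.isOpen) sdiff_subset
    (disjoint_sdiff_left.mono_right subset_cellHull)
    (hSfin.insert a) (insert_subset ha hSA) (hTfin.insert b) (insert_subset hb hTB)
  obtain ⟨L₁, hL₁⟩ := hgrows.fst.exists_absorbsFar hF
  obtain ⟨L₂, hL₂⟩ := hgrows.snd.exists_absorbsFar hF
  obtain ⟨c, d, hcd, hran, hc, hd, hcoh⟩ := hR.exists_refinement inf_le_left inf_le_left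
    (hS.mono ((subset_insert a S).trans hSR) Subset.rfl)
    (hT.mono ((subset_insert b T).trans hTR) Subset.rfl)
  exact ⟨⟨R, c, d, s.level ⊓ Q ⊓ (L₁ ⊓ L₂), hcd, hran⟩,
    { rel_subset := hgrows.subset
      coherent := hcoh
      left_le := hc.trans inf_le_right
      right_le := hd.trans inf_le_right
      level_le := inf_le_left
      absorbs_fst := hL₁ _ (inf_le_right.trans inf_le_left)
      absorbs_snd := hL₂ _ (inf_le_right.trans inf_le_right)
      mem_fst := hSR (mem_insert a S)
      mem_snd := hTR (mem_insert b T) }⟩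

end Stage

/-- A presentation of the complement of `P` as contained in an increasing union of closed sets
`F n` off `D` that are small: every nonempty open set contains copies of `(X, P)` off `D` and
`F n`. -/
structure IsComplementFiltration (P D : Set X) (F : ℕ → Set X) : Prop where
  isClosed : ∀ n, IsClosed (F n)
  monotone : Monotone F
  disjoint : ∀ n, Disjoint D (F n)
  compl_subset : Pᶜ ⊆ ⋃ n, F n
  hasCopiesOff : ∀ n, HasCopiesOff P (D ∪ F n)

theorem IsComplementFiltration.subset {D : Set X} {F : ℕ → Set X}
    (hF : IsComplementFiltration P D F) : D ⊆ P := fun x hx => by_contra fun hxP => by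
  obtain ⟨n, hn⟩ := mem_iUnion.1 (hF.compl_subset hxP)
  exact disjoint_left.1 (hF.disjoint n) hx hn

theorem IsComplementFiltration.isExtensible {F : ℕ → Set X}
    (hF : IsComplementFiltration P (A ∪ B) F) (hA : Dense A) (hB : Dense B)
    {c d : LocallyConstant X ℕ} (hcd : range c = range d) (n : ℕ) :
    IsExtensible P A B (F n) c d where
  dense_left := hA
  dense_right := hB
  left_subset := subset_union_left.trans hF.subset
  right_subset := subset_union_right.trans hF.subset
  left_disjoint := (hF.disjoint n).mono_left subset_union_left
  right_disjoint := (hF.disjoint n).mono_left subset_union_right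
  hasCopiesOff := hF.hasCopiesOff n
  range_eq := hcd

theorem Stage.exists_seq [CompactSpace X] [T2Space X] [TotallyDisconnectedSpace X]
    {F : ℕ → Set X} (hF : IsComplementFiltration P (A ∪ B) F) (hA : Dense A) (hB : Dense B)
    {a b : ℕ → X} (ha : ∀ n, a n ∈ A) (hb : ∀ n, b n ∈ B) (Q : ℕ → DiscreteQuotient X) :
    ∃ s : ℕ → Stage P A B, ∀ n, Step (F n) (a n) (b n) (Q n) (s n) (s (n + 1)) := by
  choose next hnext using fun n (s : Stage P A B) =>
    s.exists_step (hF.isClosed n) (hF.isExtensible hA hB s.range_eq n) (ha n) (hb n) (Q n)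
  exact ⟨Nat.rec ⟨∅, .const X 0, .const X 0, ⊤, .empty, rfl⟩ next, fun n => hnext n _⟩

theorem exists_forall_color_eq {X Y : Type*} [TopologicalSpace X] [TopologicalSpace Y]
    [CompactSpace Y] {c : ℕ → LocallyConstant X ℕ} {d : ℕ → LocallyConstant Y ℕ}
    (hran : ∀ n, range (c n) ⊆ range (d n))
    (hcoh : ∀ n x y, c (n + 1) x = d (n + 1) y → c n x = d n y) (x : X) :
    ∃ y, ∀ n, c n x = d n y := by
  have hclosed (n : ℕ) : IsClosed {y | c n x = d n y} :=
    isClosed_eq continuous_const (d n).continuous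
  obtain ⟨y, hy⟩ := IsCompact.nonempty_iInter_of_sequence_nonempty_isCompact_isClosed
    (fun n => {y | c n x = d n y}) (fun n y => hcoh n x y)
    (fun n => (hran n (mem_range_self x)).imp fun _ => Eq.symm) (hclosed 0).isCompact hclosed
  exact ⟨y, mem_iInter.1 hy⟩

theorem exists_homeomorph_of_coherent_colorings {X Y : Type*} [TopologicalSpace X] [CompactSpace X]
    [TopologicalSpace Y] [CompactSpace Y] {c : ℕ → LocallyConstant X ℕ}
    {d : ℕ → LocallyConstant Y ℕ} (hran : ∀ n, range (c n) = range (d n))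
    (hcoh : ∀ n x y, c (n + 1) x = d (n + 1) y → c n x = d n y)
    (hc : ∀ x x', (∀ n, c n x = c n x') → x = x') (hd : ∀ y y', (∀ n, d n y = d n y') → y = y') :
    ∃ h : X ≃ₜ Y, ∀ x y, (∀ n, c n x = d n y) → h x = y := by
  let f (x : X) (n : ℕ) : ℕ := c n x
  let g (y : Y) (n : ℕ) : ℕ := d n y
  have hf : IsClosedEmbedding f := (continuous_pi fun n => (c n).continuous).isClosedEmbedding
    fun x x' h => hc x x' (congrFun h)
  have hg : IsClosedEmbedding g := (continuous_pi fun n => (d n).continuous).isClosedEmbedding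
    fun y y' h => hd y y' (congrFun h)
  have hfg : range f = range g := by
    refine Subset.antisymm (range_subset_iff.2 fun x => ?_) (range_subset_iff.2 fun y => ?_)
    · obtain ⟨y, hy⟩ := exists_forall_color_eq (fun n => (hran n).subset) hcoh x
      exact ⟨y, funext fun n => (hy n).symm⟩
    · obtain ⟨x, hx⟩ := exists_forall_color_eq (fun n => (hran n).symm.subset)
        (fun n y x h => (hcoh n x y h.symm).symm) y
      exact ⟨x, funext fun n => (hx n).symm⟩
  refine ⟨(hf.toHomeomorph.trans (.setCongr hfg)).trans hg.toHomeomorph.symm, fun x y hxy => ?_⟩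
  exact hg.toHomeomorph.symm_apply_eq.2 (Subtype.ext (funext hxy))

theorem preimage_eq_of_forall_mem_graph {α β : Type*} {h : α → β} (hinj : Injective h)
    {S : Set α} {T : Set β} {Γ : Set (α × β)} (hΓ : ∀ p ∈ Γ, h p.1 = p.2)
    (hST : ∀ p ∈ Γ, p.1 ∈ S ↔ p.2 ∈ T) (hS : S ⊆ Prod.fst '' Γ) (hT : T ⊆ Prod.snd '' Γ) :
    h ⁻¹' T = S := by
  ext x
  constructor
  · intro hx
    obtain ⟨p, hp, hpx⟩ := hT hx
    rw [← hinj ((hΓ p hp).trans hpx), hST p hp, hpx]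
    exact hx
  · intro hx
    obtain ⟨p, hp, rfl⟩ := hS hx
    rwa [mem_preimage, hΓ p hp, ← hST p hp]

theorem countable_discreteQuotient [CompactSpace X] [T2Space X] [TotallyDisconnectedSpace X]
    [SecondCountableTopology X] : Countable (DiscreteQuotient X) := by
  have := TopologicalSpace.Clopens.countable_iff_secondCountable.2 ‹SecondCountableTopology X›
  exact (DiscreteQuotient.finsetClopens_inj X).countable

theorem Stage.exists_homeomorph [CompactSpace X] [T2Space X] [TotallyDisconnectedSpace X]
    {F : ℕ → Set X} {a b : ℕ → X} {Q : ℕ → DiscreteQuotient X} (hQ : Surjective Q)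
    {s : ℕ → Stage P A B} (hs : ∀ n, Step (F n) (a n) (b n) (Q n) (s n) (s (n + 1))) :
    ∃ h : X ≃ₜ X, ∀ n, ∀ p ∈ (s n).rel, h p.1 = p.2 := by
  have hrel : Monotone fun n => (s n).rel := monotone_nat_of_le_succ fun n => (hs n).rel_subset
  have hcoh {m n : ℕ} (hmn : m ≤ n) (x y : X) :
      (s n).left x = (s n).right y → (s m).left x = (s m).right y := by
    induction n, hmn using Nat.le_induction with
    | base => exact id
    | succ n _ ih => exact fun h => ih ((hs n).coherent x y h)
  obtain ⟨h, hh⟩ := exists_homeomorph_of_coherent_colorings (fun n => (s n).range_eq)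
    (fun n => (hs n).coherent)
    (fun x x' hx => DiscreteQuotient.eq_of_forall_proj_eq <| hQ.forall.2 fun n =>
      discreteQuotient_le_iff.1 (hs n).left_le x x' (hx (n + 1)))
    (fun y y' hy => DiscreteQuotient.eq_of_forall_proj_eq <| hQ.forall.2 fun n =>
      discreteQuotient_le_iff.1 (hs n).right_le y y' (hy (n + 1)))
  refine ⟨h, fun n p hp => hh p.1 p.2 fun m => ?_⟩
  exact hcoh (le_max_left m n) _ _
    ((s (max m n)).isMatching.color_eq p (hrel (le_max_right m n) hp))

theorem Stage.iUnion_subset [CompactSpace X] [T2Space X] [TotallyDisconnectedSpace X]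
    {F : ℕ → Set X} (hF : Monotone F) {a b : ℕ → X} {Q : ℕ → DiscreteQuotient X}
    (hQ : Surjective Q) {s : ℕ → Stage P A B}
    (hs : ∀ n, Step (F n) (a n) (b n) (Q n) (s n) (s (n + 1))) :
    ⋃ n, F n ⊆ Prod.fst '' (⋃ n, (s n).rel) ∧ ⋃ n, F n ⊆ Prod.snd '' (⋃ n, (s n).rel) := by
  have hlevel : Antitone fun n => (s n).level :=
    antitone_nat_of_succ_le fun n => (hs n).level_le.trans inf_le_left
  have hcofinal (Q' : DiscreteQuotient X) : ∃ n, (s n).level ≤ Q' := by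
    obtain ⟨n, rfl⟩ := hQ Q'
    exact ⟨n + 1, (hs n).level_le.trans inf_le_right⟩
  rw [image_iUnion, image_iUnion]
  exact ⟨iUnion_subset_iUnion_of_absorbsFar hF (fun n => (s n).isMatching.isClosed_image_fst)
      hlevel hcofinal fun n => (hs n).absorbs_fst,
    iUnion_subset_iUnion_of_absorbsFar hF (fun n => (s n).isMatching.isClosed_image_snd)
      hlevel hcofinal fun n => (hs n).absorbs_snd⟩

theorem IsComplementFiltration.exists_homeomorph [CompactSpace X] [T2Space X]
    [TotallyDisconnectedSpace X] [SecondCountableTopology X] {F : ℕ → Set X}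
    (hF : IsComplementFiltration P (A ∪ B) F) (hAc : A.Countable) (hA : Dense A)
    (hBc : B.Countable) (hB : Dense B) :
    ∃ h : X ≃ₜ X, h ⁻¹' P = P ∧ h '' A = B := by
  cases isEmpty_or_nonempty X
  · exact ⟨.refl X, rfl, Subsingleton.elim _ _⟩
  have := countable_discreteQuotient (X := X)
  obtain ⟨a, rfl⟩ := hAc.exists_eq_range hA.nonempty
  obtain ⟨b, rfl⟩ := hBc.exists_eq_range hB.nonempty
  obtain ⟨Q, hQ⟩ := exists_surjective_nat (DiscreteQuotient X)
  obtain ⟨s, hs⟩ := Stage.exists_seq hF hA hB mem_range_self mem_range_self Q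
  obtain ⟨h, hh⟩ := Stage.exists_homeomorph hQ hs
  obtain ⟨hfst, hsnd⟩ := Stage.iUnion_subset hF.monotone hQ hs
  let Γ : Set (X × X) := ⋃ n, (s n).rel
  have hΓ : ∀ p ∈ Γ, h p.1 = p.2 := fun p hp => by
    obtain ⟨n, hn⟩ := mem_iUnion.1 hp
    exact hh n p hn
  have hΓP : ∀ p ∈ Γ, p.1 ∈ Pᶜ ↔ p.2 ∈ Pᶜ := fun p hp => by
    obtain ⟨n, hn⟩ := mem_iUnion.1 hp
    exact not_congr ((s n).isMatching.mem_iff p hn)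
  have hΓAB : ∀ p ∈ Γ, p.1 ∈ range a ↔ p.2 ∈ range b := fun p hp => by
    obtain ⟨n, hn⟩ := mem_iUnion.1 hp
    exact (s n).isMatching.mem_dense_iff p hn
  have hpreP : h ⁻¹' Pᶜ = Pᶜ := preimage_eq_of_forall_mem_graph h.injective hΓ hΓP
    (hF.compl_subset.trans hfst) (hF.compl_subset.trans hsnd)
  have hpreB : h ⁻¹' range b = range a := preimage_eq_of_forall_mem_graph h.injective hΓ hΓAB
    (range_subset_iff.2 fun n => image_mono (subset_iUnion _ (n + 1)) (hs n).mem_fst)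
    (range_subset_iff.2 fun n => image_mono (subset_iUnion _ (n + 1)) (hs n).mem_snd)
  exact ⟨h, compl_injective hpreP, by rw [← hpreB, image_preimage_eq _ h.surjective]⟩

end BackAndForth

section Powers

variable {Z : Type*} [TopologicalSpace Z]

theorem hasCopiesOff_pi {Y S : Set Z} {W : Set (ℕ → Z)} {N : ℕ} (hS : Dense S)
    (hSY : Disjoint S Y) (hW : ∀ x : ℕ → Z, (∀ i ≤ N, x i ∈ S) → x ∉ W) :
    HasCopiesOff (univ.pi fun _ : ℕ => Yᶜ) W := by
  intro V hV hVne
  obtain ⟨p, hpV, hpS⟩ :=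
    (dense_pi (univ : Set ℕ) fun _ _ => hS).inter_open_nonempty V hV hVne
  obtain ⟨I, u, hu, huV⟩ := isOpen_pi_iff.1 hV p hpV
  obtain ⟨m, hm⟩ := (insert N I).bddAbove
  let e (x : ℕ → Z) (i : ℕ) : Z := if i ≤ m then p i else x (i - (m + 1))
  have he_of_le (x : ℕ → Z) {i : ℕ} (hi : i ≤ m) : e x i = p i := if_pos hi
  have he_add (x : ℕ → Z) (i : ℕ) : e x (i + (m + 1)) = x i := by
    simp [e, show ¬ i + (m + 1) ≤ m by lia]
  refine ⟨e, ?_, fun x y hxy => ?_, range_subset_iff.2 fun x => ⟨huV fun i hi => ?_, hW _ ?_⟩, ?_⟩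
  · refine continuous_pi fun i => ?_
    by_cases hi : i ≤ m <;> simp only [e, hi, if_true, if_false] <;> fun_prop
  · funext i
    rw [← he_add x, hxy, he_add y]
  · rw [he_of_le x (hm (Finset.mem_insert_of_mem hi))]
    exact (hu i hi).2
  · intro i hi
    rw [he_of_le x (hi.trans (hm (Finset.mem_insert_self N I)))]
    exact hpS i (mem_univ i)
  · ext x
    refine ⟨fun hx i _ => he_add x i ▸ hx (i + (m + 1)) (mem_univ _), fun hx i _ => ?_⟩
    by_cases hi : i ≤ m
    · exact he_of_le x hi ▸ disjoint_left.1 hSY (hpS i (mem_univ i))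
    · simpa only [e, if_neg hi] using hx _ (mem_univ _)

theorem isComplementFiltration_pi {Y C S : Set Z} {K : ℕ → Set Z} {D : Set (ℕ → Z)}
    (hS : Dense S) (hSYC : Disjoint S (Y ∪ C)) (hK : Monotone K) (hKc : ∀ n, IsClosed (K n))
    (hYK : Y ⊆ ⋃ n, K n) (hCSK : ∀ n, Disjoint (C ∪ S) (K n)) (hD : ∀ x ∈ D, ∀ i, x i ∈ C) :
    IsComplementFiltration (univ.pi fun _ : ℕ => Yᶜ) D fun n => ⋃ i ≤ n, eval i ⁻¹' K n where
  isClosed n := (finite_le_nat n).isClosed_biUnion fun i _ => (hKc n).preimage (continuous_apply i)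
  monotone _ _ hmn := biUnion_mono (fun _ hi => le_trans hi hmn) fun _ _ => preimage_mono (hK hmn)
  disjoint n := disjoint_iUnion₂_right.2 fun i _ => disjoint_left.2 fun x hx =>
    disjoint_left.1 (hCSK n) (.inl (hD x hx i))
  compl_subset x hx := by
    obtain ⟨i, hi⟩ : ∃ i, x i ∈ Y := by simpa [mem_pi] using hx
    obtain ⟨n, hn⟩ := mem_iUnion.1 (hYK hi)
    exact mem_iUnion.2 ⟨max i n, mem_iUnion₂.2 ⟨i, le_max_left i n, hK (le_max_right i n) hn⟩⟩
  hasCopiesOff n := by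
    refine hasCopiesOff_pi (N := n) hS (hSYC.mono_right subset_union_left) fun x hx => ?_
    rintro (hxD | hxK)
    · exact disjoint_left.1 hSYC (hx 0 n.zero_le) (.inr (hD x hxD 0))
    · obtain ⟨i, hi, hxi⟩ := mem_iUnion₂.1 hxK
      exact disjoint_left.1 (hCSK n) (.inr (hx i hi)) hxi

theorem exists_isComplementFiltration_pi [BaireSpace Z] [T1Space Z] [PerfectSpace Z]
    [SecondCountableTopology Z] {Y : Set Z}
    (hY : ∀ D : Set Z, D.Countable → IsLambdaSet ↥(Y ∪ D)) {D : Set (ℕ → Z)} (hD : D.Countable)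
    (hDY : D ⊆ univ.pi fun _ => Yᶜ) :
    ∃ F, IsComplementFiltration (univ.pi fun _ : ℕ => Yᶜ) D F := by
  let C : Set Z := ⋃ x ∈ D, range x
  have hC : C.Countable := hD.biUnion fun x _ => countable_range x
  have hCY : Disjoint C Y := disjoint_iUnion₂_left.2 fun x hx =>
    disjoint_left.2 <| forall_mem_range.2 fun i => hDY hx i (mem_univ i)
  obtain ⟨S, hSYC, hSc, hS⟩ := (hY C hC).dense_compl.exists_countable_dense_subset
  rw [subset_compl_iff_disjoint_right] at hSYC
  obtain ⟨K, hK, hKc, hCSK, hYK⟩ :=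
    (hY (C ∪ S) (hC.union hSc)).exists_monotone_isClosed (hC.union hSc) subset_union_right
  have hYCS : Disjoint Y (C ∪ S) :=
    hCY.symm.union_right (hSYC.mono_right subset_union_left).symm
  rw [union_sdiff_right, hYCS.sdiff_eq_left] at hYK
  exact ⟨_, isComplementFiltration_pi hS hSYC hK hKc hYK hCSK fun x hx i =>
    mem_biUnion hx (mem_range_self i)⟩

theorem isCDH_of_isDenseEmbedding {W X : Type*} [TopologicalSpace W] [TopologicalSpace X]
    {ι : W → X} (hι : IsDenseEmbedding ι)
    (H : ∀ A B : Set X, A ⊆ range ι → B ⊆ range ι → A.Countable → Dense A → B.Countable → Dense B →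
      ∃ h : X ≃ₜ X, h ⁻¹' range ι = range ι ∧ h '' A = B) : IsCDH W := by
  intro A B hA hAd hB hBd
  obtain ⟨h, hh, hAB⟩ := H (ι '' A) (ι '' B) (image_subset_range ι A) (image_subset_range ι B)
    (hA.image ι) (hι.dense_image.2 hAd) (hB.image ι) (hι.dense_image.2 hBd)
  let r : W ≃ₜ range ι := hι.isEmbedding.toHomeomorph
  let g : W ≃ₜ W := (r.trans (h.subtype fun x => (Set.ext_iff.1 hh x).symm)).trans r.symm
  have hg (w : W) : ι (g w) = h (ι w) := congrArg Subtype.val (r.apply_symm_apply _)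
  refine ⟨g, hι.injective.image_injective ?_⟩
  rw [← hAB, image_image, image_image]
  exact image_congr fun w _ => hg w

theorem statement18_general [CompactSpace Z] [T2Space Z] [TotallyDisconnectedSpace Z]
    [SecondCountableTopology Z] [PerfectSpace Z] (Y : Set Z)
    (hY : ∀ D : Set Z, D.Countable → IsLambdaSet ↥(Y ∪ D)) : IsCDH (ℕ → ↥Yᶜ) := by
  have hYd : Dense Yᶜ := (union_empty Y ▸ hY ∅ countable_empty).dense_compl
  have hran : range (Pi.map fun _ : ℕ => ((↑) : ↥Yᶜ → Z)) = univ.pi fun _ => Yᶜ := by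
    rw [range_piMap, Subtype.range_coe]
  have hι : IsDenseEmbedding (Pi.map fun _ : ℕ => ((↑) : ↥Yᶜ → Z)) :=
    { IsEmbedding.piMap fun _ => .subtypeVal with
      dense := .piMap fun _ => hYd.denseRange_val }
  refine isCDH_of_isDenseEmbedding hι fun A B hAran hBran hA hAd hB hBd => ?_
  rw [hran] at hAran hBran ⊢
  obtain ⟨F, hF⟩ := exists_isComplementFiltration_pi hY (hA.union hB) (union_subset hAran hBran)
  exact hF.exists_homeomorph hA hAd hB hBd

end Powers

/-- If `Y ⊆ 2^ω` is a λ'-set, then `(2^ω \ Y)^ω` is countable dense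
homogeneous. -/
theorem statement18 (Y : Set (ℕ → Bool)) (hY : IsLambdaPrimeSet Y) :
    IsCDH (ℕ → ↥(Yᶜ)) :=
  statement18_general Y hY
end

section
/- There exists a zero-dimensional separable metrizable space X such that X has a dense Polish subspace but X^ω is not countable dense homogeneous. (Indeed, one may take X = Q ∪ D ⊆ 2^ω × 2^ω, where z ∈ 2^ω is fixed, D = 2^ω × (2^ω \ {z}), and Q is a countable dense subset of 2^ω × {z}.) -/
/-- A space is zero-dimensional if it has a base consisting of clopen sets. -/
def ZeroDimensional (X : Type*) [TopologicalSpace X] : Prop :=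
  ∀ (x : X) (U : Set X), IsOpen U → x ∈ U → ∃ C : Set X, IsClopen C ∧ x ∈ C ∧ C ⊆ U
/-!
If `Y` is CDH and has a dense Polish subspace `P`, then every countable closed `C ⊆ Y` is Polish:
pick a countable dense `A ⊆ P`; a homeomorphism carrying `A` onto `A ∪ C` identifies `C` with a
closed subspace of `Y` that lies inside `P`. Apply this to `Y = X ^ ω`, with the power of a dense
Polish subspace of `X` as `P` and a diagonal copy of a closed subspace of `X` as `C`. In
`X = Q ∪ D`, the set `Q` is closed and countable but has no isolated points, so by the Baire
category theorem it is not Polish.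
-/

open Set Topology Filter

section Perfect

theorem perfectSpace_pi_s19 {ι : Type*} [Infinite ι] {X : ι → Type*} [∀ i, TopologicalSpace (X i)]
    [∀ i, Nontrivial (X i)] : PerfectSpace (∀ i, X i) := by
  classical
  refine perfectSpace_iff_forall_not_isolated.2 fun x => ?_
  choose y hy using fun i => exists_ne (x i)
  have tendsto_update : Tendsto (fun i => Function.update x i (y i)) cofinite (𝓝 x) :=
    tendsto_pi_nhds.2 fun j => tendsto_const_nhds.congr' <| by
      filter_upwards [eventually_cofinite_ne j] with i hij
      exact (Function.update_of_ne (Ne.symm hij) _ _).symm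
  refine mem_closure_iff_nhdsWithin_neBot.1
    (mem_closure_of_tendsto tendsto_update (Eventually.of_forall fun i => ?_))
  simpa only [mem_compl_iff, mem_singleton_iff, Function.update_eq_self_iff] using hy i

variable {X Y : Type*} [TopologicalSpace X] [TopologicalSpace Y]

theorem preperfect_range [PerfectSpace X] {f : X → Y} (hf : Continuous f)
    (hinj : Function.Injective f) : Preperfect (range f) := by
  rintro _ ⟨x, rfl⟩
  rw [← image_univ, ← map_principal]
  exact (PerfectSpace.univ_preperfect x (mem_univ x)).map hf.continuousAt hinj

theorem perfect_univ_prod_singleton [PerfectSpace X] [T1Space Y] (y : Y) :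
    Perfect (univ ×ˢ {y} : Set (X × Y)) where
  closed := isClosed_univ.prod isClosed_singleton
  acc := by
    rw [prod_singleton, image_univ]
    exact preperfect_range (by fun_prop) (Prod.mk_left_injective y)

theorem preperfect_of_subset_closure [T1Space X] {s F : Set X} (hF : Perfect F) (hsF : s ⊆ F)
    (hFs : F ⊆ closure s) : Preperfect s := by
  have closure_eq : closure s = F := (closure_minimal hsF hF.closed).antisymm hFs
  exact preperfect_iff_perfect_closure.2 (closure_eq ▸ hF)

theorem perfectSpace_coe_iff {s : Set X} : PerfectSpace s ↔ Preperfect s := by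
  simp only [perfectSpace_iff_forall_not_isolated, Preperfect, AccPt, neBot_iff, ne_eq,
    nhds_ne_subtype_eq_bot_iff, SetCoe.forall]

theorem not_baireSpace_of_countable [Countable X] [Nonempty X] [T1Space X] [PerfectSpace X] :
    ¬ BaireSpace X := fun _ => by
  have dense_inter : Dense (⋂ x : X, {x}ᶜ) :=
    dense_iInter_of_isOpen (fun _ => isOpen_compl_singleton) fun x => dense_compl_singleton x
  obtain ⟨x, hx⟩ := dense_inter.nonempty
  exact mem_iInter.1 hx x rfl

end Perfect

section ZeroDimensional

variable {X Y : Type*} [TopologicalSpace X] [TopologicalSpace Y]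

theorem zeroDimensional_of_compactSpace [CompactSpace X] [T2Space X] [TotallyDisconnectedSpace X] :
    ZeroDimensional X :=
  fun _ _ hU hx => compact_exists_isClopen_in_isOpen hU hx

theorem ZeroDimensional.of_isInducing (hY : ZeroDimensional Y) {f : X → Y} (hf : IsInducing f) :
    ZeroDimensional X := by
  intro x U hU hx
  obtain ⟨V, hV, rfl⟩ := hf.isOpen_iff.1 hU
  obtain ⟨C, hC, hxC, hCV⟩ := hY (f x) V hV hx
  exact ⟨f ⁻¹' C, hC.preimage hf.continuous, hxC, preimage_mono hCV⟩

theorem ZeroDimensional.prod (hX : ZeroDimensional X) (hY : ZeroDimensional Y) :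
    ZeroDimensional (X × Y) := by
  rintro ⟨x, y⟩ W hW hxy
  obtain ⟨U, V, hU, hV, hxU, hyV, hUV⟩ := isOpen_prod_iff.1 hW x y hxy
  obtain ⟨C, hC, hxC, hCU⟩ := hX x U hU hxU
  obtain ⟨D, hD, hyD, hDV⟩ := hY y V hV hyV
  exact ⟨C ×ˢ D, hC.prod hD, ⟨hxC, hyD⟩, (prod_mono hCU hDV).trans hUV⟩

end ZeroDimensional

namespace IsCDH

variable {ι P X C : Type*} [TopologicalSpace P] [TopologicalSpace X] [TopologicalSpace C]
  [PolishSpace P] [Countable C] {g : P → X} {f : C → X}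

theorem polishSpace_of_isClosedEmbedding (hX : IsCDH X) (hg : IsDenseEmbedding g)
    (hf : IsClosedEmbedding f) : PolishSpace C := by
  obtain ⟨A, hAc, hAd⟩ := TopologicalSpace.exists_countable_dense P
  have hgA : Dense (g '' A) := hg.dense_image.2 hAd
  obtain ⟨h, hh⟩ := hX (g '' A) (g '' A ∪ range f) (hAc.image g) hgA
    ((hAc.image g).union (countable_range f)) (hgA.mono subset_union_left)
  have range_subset : range f ⊆ range (h ∘ g) :=
    calc range f ⊆ h '' (g '' A) := hh ▸ subset_union_right
      _ ⊆ range (h ∘ g) := by rw [← image_comp]; exact image_subset_range _ _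
  choose k hk using fun c => range_subset (mem_range_self c)
  have hgk : (h ∘ g) ∘ k = f := funext hk
  have hk_closed : IsClosedEmbedding k :=
    .of_comp (h.isEmbedding.comp hg.isEmbedding) (hgk ▸ hf)
  exact hk_closed.polishSpace

theorem polishSpace_of_isClosedEmbedding_of_pi [Countable ι] [Nonempty ι] [T2Space X]
    (hX : IsCDH (ι → X)) (hg : IsDenseEmbedding g) (hf : IsClosedEmbedding f) :
    PolishSpace C := by
  have hg_pi : IsDenseEmbedding (Pi.map fun _ : ι => g) :=
    { IsEmbedding.piMap fun _ => hg.isEmbedding with dense := .piMap fun _ => hg.dense }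
  have diagonal : IsClosedEmbedding (Function.const ι : X → ι → X) :=
    Function.LeftInverse.isClosedEmbedding (f := fun x : ι → X => x (Classical.arbitrary ι))
      (fun _ => rfl) (by fun_prop) (continuous_pi fun _ => continuous_id)
  exact hX.polishSpace_of_isClosedEmbedding hg_pi (diagonal.comp hf)

end IsCDH

section DenseSubspace

variable {Y : Type*} [TopologicalSpace Y] {s t : Set Y}

theorem isDenseEmbedding_inclusion (hst : s ⊆ t) (hts : t ⊆ closure s) :
    IsDenseEmbedding (inclusion hst) :=
  { IsEmbedding.inclusion hst with dense := (denseRange_inclusion_iff hst).2 hts }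

theorem exists_dense_polishSpace_of_subset [PolishSpace s] (hst : s ⊆ t) (hts : t ⊆ closure s) :
    ∃ G : Set t, Dense G ∧ PolishSpace G :=
  have hdense := isDenseEmbedding_inclusion hst hts
  ⟨range (inclusion hst), hdense.dense,
    hdense.isEmbedding.toHomeomorph.symm.isClosedEmbedding.polishSpace⟩

end DenseSubspace

section UnionCompl

variable {ι Y : Type*} [TopologicalSpace Y] {F Q : Set Y}

theorem isClosedEmbedding_inclusion_union_compl (hF : IsClosed F) (hQF : Q ⊆ F) :
    IsClosedEmbedding (inclusion (subset_union_left : Q ⊆ Q ∪ Fᶜ)) := by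
  refine .inclusion _ ?_
  have : ((↑) ⁻¹' Q : Set ↥(Q ∪ Fᶜ)) = (↑) ⁻¹' F := by
    ext ⟨x, hx⟩
    exact ⟨fun h => hQF h, hx.resolve_right ∘ not_not_intro⟩
  exact this ▸ hF.preimage continuous_subtype_val

theorem not_isCDH_pi_union_compl [Countable ι] [Nonempty ι] [T2Space Y] [PolishSpace ↥Fᶜ]
    (hF : IsClosed F) (hFd : Dense Fᶜ) (hQF : Q ⊆ F) (hQc : Q.Countable) (hQ : Q.Nonempty)
    (hQp : Preperfect Q) : ¬ IsCDH (ι → ↥(Q ∪ Fᶜ)) := by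
  intro hcdh
  have := hQc.to_subtype
  have := hQ.to_subtype
  have := perfectSpace_coe_iff.2 hQp
  have : PolishSpace Q := hcdh.polishSpace_of_isClosedEmbedding_of_pi
    (isDenseEmbedding_inclusion subset_union_right fun y _ => hFd y)
    (isClosedEmbedding_inclusion_union_compl hF hQF)
  exact not_baireSpace_of_countable (X := Q) inferInstance

end UnionCompl

section Product

variable {K L : Type*} [TopologicalSpace K] [TopologicalSpace L] {z : L} {Q : Set (K × L)}

theorem statement19_general {ι : Type*} [Countable ι] [Nonempty ι] [PolishSpace K] [PolishSpace L]
    [PerfectSpace K] [Nonempty K] [(𝓝[≠] z).NeBot] (hK : ZeroDimensional K)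
    (hL : ZeroDimensional L) (hQc : Q.Countable) (hQz : Q ⊆ univ ×ˢ {z})
    (hQd : univ ×ˢ {z} ⊆ closure Q) :
    ZeroDimensional ↥(Q ∪ univ ×ˢ {z}ᶜ) ∧
      (∃ G : Set ↥(Q ∪ univ ×ˢ {z}ᶜ), Dense G ∧ PolishSpace G) ∧
      ¬ IsCDH (ι → ↥(Q ∪ univ ×ˢ {z}ᶜ)) := by
  have compl_fiber : (univ ×ˢ {z}ᶜ : Set (K × L)) = (univ ×ˢ {z})ᶜ := by
    simp only [univ_prod, preimage_compl]
  have perfect_fiber : Perfect (univ ×ˢ {z} : Set (K × L)) := perfect_univ_prod_singleton z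
  have dense_compl : Dense (univ ×ˢ {z} : Set (K × L))ᶜ :=
    compl_fiber ▸ dense_univ.prod (dense_compl_singleton z)
  have nonempty : Q.Nonempty :=
    closure_nonempty_iff.1 <| (univ_nonempty.prod (singleton_nonempty z)).mono hQd
  have polish_compl := perfect_fiber.closed.isOpen_compl.polishSpace
  rw [compl_fiber]
  exact ⟨(hK.prod hL).of_isInducing IsInducing.subtypeVal,
    exists_dense_polishSpace_of_subset subset_union_right fun y _ => dense_compl y,
    not_isCDH_pi_union_compl perfect_fiber.closed dense_compl hQz hQc nonempty
      (preperfect_of_subset_closure perfect_fiber hQz hQd)⟩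

end Product

/-- There exists a zero-dimensional (separable metrizable) space `X` such that
`X` has a dense Polish subspace while `X^ω` is not countable dense homogeneous.
Indeed, one may take `X = Q ∪ D ⊆ 2^ω × 2^ω`, where `z ∈ 2^ω` is fixed,
`D = 2^ω × (2^ω \ {z})`, and `Q` is a countable dense subset of `2^ω × {z}`. -/
theorem statement19 :
    ∃ X : Set ((ℕ → Bool) × (ℕ → Bool)),
      ZeroDimensional X ∧
      (∃ G : Set X, Dense G ∧ PolishSpace G) ∧
      ¬ IsCDH (ℕ → X) ∧
      ∃ (z : ℕ → Bool) (Q : Set ((ℕ → Bool) × (ℕ → Bool))),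
        Q.Countable ∧ Q ⊆ Set.univ ×ˢ ({z} : Set (ℕ → Bool)) ∧
        Set.univ ×ˢ ({z} : Set (ℕ → Bool)) ⊆ closure Q ∧
        X = Q ∪ Set.univ ×ˢ ({z}ᶜ : Set (ℕ → Bool)) := by
  have : PolishSpace (ℕ → Bool) := {}
  have : PerfectSpace (ℕ → Bool) := perfectSpace_pi_s19
  obtain ⟨Q, hQz, hQc, hQd⟩ := (TopologicalSpace.IsSeparable.of_separableSpace
    (univ ×ˢ {⊥} : Set ((ℕ → Bool) × (ℕ → Bool)))).exists_countable_dense_subset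
  obtain ⟨zeroDim, polish, not_cdh⟩ := statement19_general (ι := ℕ)
    zeroDimensional_of_compactSpace zeroDimensional_of_compactSpace hQc hQz hQd
  exact ⟨_, zeroDim, polish, not_cdh, _, Q, hQc, hQz, hQd, rfl⟩
end
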